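/- The presheaf construction L satisfies the Beck-Chevalley Condition: if (p0: P → A, p1: P → B, f: A → C, g: B → C) is an exact lax square of V-categories over a commutative quantale V, then the induced square of presheaf V-categories is exact; concretely, for every presheaf F on A and every presheaf G on B: ⋀_c [ ⋁_a F a ⊗ C(c, f a), ⋁_b G b ⊗ C(c, g b) ] = ⋁_H ( ⋀_a [ F a, ⋁_w H w ⊗ A(a, p0 w) ] ) ⊗ ( ⋀_b [ ⋁_w H w ⊗ B(b, p1 w), G b ] ), where H ranges over presheaves on P. -/

import Mathlib

universe u v w

/-- A category enriched in a commutative quantale `V`: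
objects together with `V`-valued homs satisfying the identity and composition axioms. -/
structure VCategory (V : Type u) [CompleteLattice V] [CommMonoid V] where
  Obj : Type v
  hom : Obj → Obj → V
  one_le_hom : ∀ a, (1 : V) ≤ hom a a
  comp_le : ∀ a b c, hom b c * hom a b ≤ hom a c

/-- A `V`-functor is an object assignment which is (hom-)expanding. -/
def IsVFunctor {V : Type u} [CompleteLattice V] [CommMonoid V]
    (A : VCategory.{u, v} V) (B : VCategory.{u, w} V) (f : A.Obj → B.Obj) : Prop :=
  ∀ a a', A.hom a a' ≤ B.hom (f a) (f a')

/-- A module `R : A ⇸ B`. -/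
def IsModule {V : Type u} [CompleteLattice V] [CommMonoid V]
    (A : VCategory.{u, v} V) (B : VCategory.{u, w} V) (R : B.Obj → A.Obj → V) : Prop :=
  ∀ (a a' : A.Obj) (b b' : B.Obj), B.hom b' b * R b a * A.hom a a' ≤ R b' a'

/-- The internal hom of the quantale: `[x,y] = ⋁ {z | x ⊗ z ≤ y}`. -/
def ihom {V : Type u} [CompleteLattice V] [CommMonoid V] (x y : V) : V :=
  sSup {z | x * z ≤ y}

/-- A presheaf on `A`. -/
def IsPresheaf {V : Type u} [CompleteLattice V] [CommMonoid V]
    (A : VCategory.{u, v} V) (F : A.Obj → V) : Prop :=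
  ∀ a a', F a * A.hom a' a ≤ F a'

/-!
`L f` is left adjoint to restriction along `f`, so the left-hand side is
`L A (F, f^* (L g G))` and, by the adjunction for `p1`, the right-hand side is
`⨆ H, L A (F, L p0 H) ⊗ L P (H, p1^* G)`. Co-Yoneda reduces that supremum to
`L A (F, L p0 (p1^* G))`: the summand at `H = p1^* G` is an upper bound, because `L p0` is a
`V`-functor. Exactness of the square says precisely that the two presheaves `f^* (L g G)` and
`L p0 (p1^* G)` agree.
-/

section Quantale

theorem isQuantale_of_mul_sSup {V : Type*} [CompleteLattice V] [CommSemigroup V]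
    (h : ∀ (x : V) (s : Set V), x * sSup s = ⨆ y ∈ s, x * y) : IsQuantale V where
  mul_sSup_distrib := h
  sSup_mul_distrib s x := by simp only [mul_comm _ x, h]

variable {V : Type*} [CompleteLattice V] [CommMonoid V] [IsQuantale V]

theorem le_ihom_iff_mul_le {x y z : V} : z ≤ ihom x y ↔ x * z ≤ y :=
  Quantale.rightMulResiduation_le_iff_mul_le

end Quantale

section PresheafHom

variable {V X : Type*} [CompleteLattice V] [CommMonoid V]

/-- The hom `L A (F, G)` of the presheaf `V`-category. It depends only on the underlying
families of values, so it is defined for families indexed by any type. -/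
def presheafHom (F G : X → V) : V :=
  ⨅ x, ihom (F x) (G x)

variable [IsQuantale V] {F G K : X → V}

theorem le_presheafHom_iff {z : V} : z ≤ presheafHom F G ↔ ∀ x, F x * z ≤ G x := by
  simp only [presheafHom, le_iInf_iff, le_ihom_iff_mul_le]

theorem mul_presheafHom_le (F G : X → V) (x : X) : F x * presheafHom F G ≤ G x :=
  le_presheafHom_iff.1 le_rfl x

theorem one_le_presheafHom_self (F : X → V) : 1 ≤ presheafHom F F :=
  le_presheafHom_iff.2 fun x => (mul_one (F x)).le

theorem presheafHom_mul_presheafHom_le (F G K : X → V) :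
    presheafHom F G * presheafHom G K ≤ presheafHom F K :=
  le_presheafHom_iff.2 fun x =>
    calc F x * (presheafHom F G * presheafHom G K)
        = F x * presheafHom F G * presheafHom G K := (mul_assoc _ _ _).symm
      _ ≤ G x * presheafHom G K := mul_le_mul_left (mul_presheafHom_le F G x) _
      _ ≤ K x := mul_presheafHom_le G K x

end PresheafHom

section PresheafMap

variable {V : Type u} {X : Type*} [CompleteLattice V] [CommMonoid V]

/-- The presheaf `L p F` on `A`, obtained by extending `F` along `p : X → A`. Its formula does not
involve the homs of the source, so the source is just a type. -/
def presheafMap (A : VCategory V) (p : X → A.Obj) (F : X → V) (a : A.Obj) : V :=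
  ⨆ x, F x * A.hom a (p x)

theorem IsPresheaf.comp [IsQuantale V] {P B : VCategory V} {G : B.Obj → V} {p : P.Obj → B.Obj}
    (hG : IsPresheaf B G) (hp : IsVFunctor P B p) : IsPresheaf P (G ∘ p) :=
  fun w w' => (mul_le_mul_right (hp w' w) _).trans (hG _ _)

variable [IsQuantale V] (A : VCategory V) (p : X → A.Obj)

theorem isPresheaf_presheafMap (F : X → V) : IsPresheaf A (presheafMap A p F) := by
  intro a a'
  simp only [presheafMap, Quantale.iSup_mul_distrib, mul_assoc]
  exact iSup_mono fun x => mul_le_mul_right (A.comp_le _ _ _) _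

theorem le_presheafMap_apply (F : X → V) (x : X) : F x ≤ presheafMap A p F (p x) :=
  calc F x = F x * 1 := (mul_one _).symm
    _ ≤ F x * A.hom (p x) (p x) := mul_le_mul_right (A.one_le_hom _) _
    _ ≤ presheafMap A p F (p x) := le_iSup (fun y => F y * A.hom (p x) (p y)) x

variable {A} in
theorem IsPresheaf.presheafMap_id {F : A.Obj → V} (hF : IsPresheaf A F) :
    presheafMap A id F = F :=
  funext fun a => le_antisymm (iSup_le fun a' => hF a' a) (le_presheafMap_apply A id F a)

theorem presheafHom_le_presheafHom_presheafMap (F G : X → V) :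
    presheafHom F G ≤ presheafHom (presheafMap A p F) (presheafMap A p G) := by
  refine le_presheafHom_iff.2 fun a => ?_
  simp only [presheafMap, Quantale.iSup_mul_distrib, mul_right_comm]
  exact iSup_mono fun x => mul_le_mul_left (mul_presheafHom_le F G x) _

variable {A} in
theorem IsPresheaf.presheafHom_presheafMap {G : A.Obj → V} (hG : IsPresheaf A G) (F : X → V) :
    presheafHom (presheafMap A p F) G = presheafHom F (G ∘ p) := by
  apply le_antisymm
  · exact le_presheafHom_iff.2 fun x =>
      (mul_le_mul_left (le_presheafMap_apply A p F x) _).trans (mul_presheafHom_le _ G (p x))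
  · calc presheafHom F (G ∘ p)
        ≤ presheafHom (presheafMap A p F) (presheafMap A p (G ∘ p)) :=
          presheafHom_le_presheafHom_presheafMap A p F (G ∘ p)
      _ ≤ presheafHom (presheafMap A p F) G := by
          refine le_presheafHom_iff.2 fun a => (mul_presheafHom_le _ _ a).trans ?_
          exact iSup_le fun x => hG (p x) a

theorem IsPresheaf.iSup_presheafHom_mul_presheafHom {P A : VCategory V} {K : P.Obj → V}
    (hK : IsPresheaf P K) (p : P.Obj → A.Obj) (F : A.Obj → V) :
    ⨆ H : {H : P.Obj → V // IsPresheaf P H},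
        presheafHom F (presheafMap A p H.1) * presheafHom H.1 K =
      presheafHom F (presheafMap A p K) := by
  apply le_antisymm
  · refine iSup_le fun H => ?_
    calc presheafHom F (presheafMap A p H.1) * presheafHom H.1 K
        ≤ presheafHom F (presheafMap A p H.1) *
            presheafHom (presheafMap A p H.1) (presheafMap A p K) :=
          mul_le_mul_right (presheafHom_le_presheafHom_presheafMap A p H.1 K) _
      _ ≤ presheafHom F (presheafMap A p K) := presheafHom_mul_presheafHom_le _ _ _
  · calc presheafHom F (presheafMap A p K)
        = presheafHom F (presheafMap A p K) * 1 := (mul_one _).symm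
      _ ≤ presheafHom F (presheafMap A p K) * presheafHom K K :=
          mul_le_mul_right (one_le_presheafHom_self K) _
      _ ≤ _ := le_iSup (fun H : {H : P.Obj → V // IsPresheaf P H} =>
          presheafHom F (presheafMap A p H.1) * presheafHom H.1 K) ⟨K, hK⟩

end PresheafMap

section ExactSquare

variable {V : Type u} [CompleteLattice V] [CommMonoid V]

/-- Exactness of the square with legs `p0, p1` out of `W` and cospan `f, g` into `C`. Only the
objects of the apex enter the formula, so the apex is a type. The lax inequality
`1 ≤ C.hom (f (p0 w)) (g (p1 w))` is contained in the case
`a = p0 w`, `b = p1 w` of the equation. -/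
def IsExactSquare {W : Type*} (A B C : VCategory V) (p0 : W → A.Obj) (p1 : W → B.Obj)
    (f : A.Obj → C.Obj) (g : B.Obj → C.Obj) : Prop :=
  ∀ a b, C.hom (f a) (g b) = ⨆ w, A.hom a (p0 w) * B.hom (p1 w) b

variable [IsQuantale V] {P A B C : VCategory V} {f : A.Obj → C.Obj} {g : B.Obj → C.Obj}

theorem IsExactSquare.presheafMap_comp {W : Type*} {p0 : W → A.Obj} {p1 : W → B.Obj}
    (h : IsExactSquare A B C p0 p1 f g) {G : B.Obj → V} (hG : IsPresheaf B G) :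
    presheafMap C g G ∘ f = presheafMap A p0 (G ∘ p1) := by
  funext a
  calc ⨆ b, G b * C.hom (f a) (g b)
      = ⨆ b, ⨆ w, G b * B.hom (p1 w) b * A.hom a (p0 w) := by
        simp only [h a, Quantale.mul_iSup_distrib, mul_assoc, mul_comm (A.hom _ _)]
    _ = ⨆ w, presheafMap B id G (p1 w) * A.hom a (p0 w) := by
        rw [iSup_comm]
        simp only [presheafMap, id, Quantale.iSup_mul_distrib]
    _ = ⨆ w, G (p1 w) * A.hom a (p0 w) := by rw [hG.presheafMap_id]

theorem presheaf_construction_BCC_general {p0 : P.Obj → A.Obj} {p1 : P.Obj → B.Obj}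
    (hp1 : IsVFunctor P B p1) (hexact : IsExactSquare A B C p0 p1 f g)
    (F : A.Obj → V) {G : B.Obj → V} (hG : IsPresheaf B G) :
    presheafHom (presheafMap C f F) (presheafMap C g G) =
      ⨆ H : {H : P.Obj → V // IsPresheaf P H},
        presheafHom F (presheafMap A p0 H.1) * presheafHom (presheafMap B p1 H.1) G :=
  calc presheafHom (presheafMap C f F) (presheafMap C g G)
      = presheafHom F (presheafMap C g G ∘ f) :=
        (isPresheaf_presheafMap C g G).presheafHom_presheafMap f F
    _ = presheafHom F (presheafMap A p0 (G ∘ p1)) := by rw [hexact.presheafMap_comp hG]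
    _ = ⨆ H : {H : P.Obj → V // IsPresheaf P H},
          presheafHom F (presheafMap A p0 H.1) * presheafHom H.1 (G ∘ p1) :=
        ((hG.comp hp1).iSup_presheafHom_mul_presheafHom p0 F).symm
    _ = _ := by simp only [hG.presheafHom_presheafMap]

end ExactSquare

/-- The presheaf construction satisfies the Beck-Chevalley Condition: it maps exact
squares to exact squares. -/
theorem presheaf_construction_BCC {V : Type u} [CompleteLattice V] [CommMonoid V]
    (hV : ∀ (x : V) (s : Set V), x * sSup s = ⨆ y ∈ s, x * y)
    (P A B C : VCategory.{u, v} V)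
    (p0 : P.Obj → A.Obj) (p1 : P.Obj → B.Obj) (f : A.Obj → C.Obj) (g : B.Obj → C.Obj)
    (hp0 : IsVFunctor P A p0) (hp1 : IsVFunctor P B p1)
    (hf : IsVFunctor A C f) (hg : IsVFunctor B C g)
    (hlax : ∀ w : P.Obj, (1 : V) ≤ C.hom (f (p0 w)) (g (p1 w)))
    (hexact : ∀ (a : A.Obj) (b : B.Obj),
      C.hom (f a) (g b) = ⨆ w, A.hom a (p0 w) * B.hom (p1 w) b) :
    ∀ (F : A.Obj → V) (G : B.Obj → V), IsPresheaf A F → IsPresheaf B G →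
      (⨅ c : C.Obj, ihom (⨆ a, F a * C.hom c (f a)) (⨆ b, G b * C.hom c (g b))) =
        ⨆ H : {H : P.Obj → V // IsPresheaf P H},
          (⨅ a : A.Obj, ihom (F a) (⨆ w, H.1 w * A.hom a (p0 w))) *
            (⨅ b : B.Obj, ihom (⨆ w, H.1 w * B.hom b (p1 w)) (G b)) := by
  have := isQuantale_of_mul_sSup hV
  exact fun F G _ hG => presheaf_construction_BCC_general hp1 hexact F hG
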